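/- Let T, E₁, E₂ : ℝ × ℝ → ℝ³ and k₁, k₂ : ℝ × ℝ → ℝ be smooth with (T, E₁, E₂) pairwise ⟨·,·⟩_L-orthogonal, ⟨T,T⟩_L = ⟨E₂,E₂⟩_L = 1, ⟨E₁,E₁⟩_L = −1, satisfying Tₛ = k₁E₁ + k₂E₂, (E₁)ₛ = k₁T, (E₂)ₛ = −k₂T and T_t = (k₂)ₛE₁ + (k₁)ₛE₂, (E₁)_t = (k₂)ₛT + ½(k₁² − k₂²)E₂, (E₂)_t = −(k₁)ₛT + ½(k₁² − k₂²)E₁. Then the principal curvatures evolve according to (k₁)_t = (k₂)ₛₛ − ½(k₁² − k₂²)k₂ and (k₂)_t = (k₁)ₛₛ − ½(k₁² − k₂²)k₁. -/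

import Mathlib

noncomputable section

open Real

/-- Minkowski 3-space: ℝ³ as a vector type. -/
abbrev V3 : Type := Fin 3 → ℝ

/-- Lorentzian inner product ⟨x,y⟩_L = −x₁y₁ + x₂y₂ + x₃y₃ on ℝ³. -/
def lor (x y : V3) : ℝ := -(x 0 * y 0) + x 1 * y 1 + x 2 * y 2

/-- Lorentzian cross product x ×_L y = (x₃y₂ − x₂y₃, x₃y₁ − x₁y₃, x₁y₂ − x₂y₁). -/
def lcross (x y : V3) : V3 :=
  ![x 2 * y 1 - x 1 * y 2, x 2 * y 0 - x 0 * y 2, x 0 * y 1 - x 1 * y 0]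

/-- Partial derivative with respect to the first variable `s`. -/
def pds {E : Type*} [NormedAddCommGroup E] [NormedSpace ℝ E]
    (f : ℝ × ℝ → E) (p : ℝ × ℝ) : E := deriv (fun s => f (s, p.2)) p.1

/-- Partial derivative with respect to the second variable `t`. -/
def pdt {E : Type*} [NormedAddCommGroup E] [NormedSpace ℝ E]
    (f : ℝ × ℝ → E) (p : ℝ × ℝ) : E := deriv (fun t => f (p.1, t)) p.2

theorem two_le_infty : (2 : WithTop ℕ∞) ≤ ((⊤ : ℕ∞) : WithTop ℕ∞) :=
  WithTop.coe_le_coe.2 (le_top : (2 : ℕ∞) ≤ ⊤)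

theorem pds_eq {E : Type*} [NormedAddCommGroup E] [NormedSpace ℝ E]
    {f : ℝ × ℝ → E} {p : ℝ × ℝ} (hf : DifferentiableAt ℝ f p) :
    pds f p = fderiv ℝ f p (1, 0) := by
  have h : HasDerivAt (fun s : ℝ => (s, p.2)) ((1 : ℝ), (0 : ℝ)) p.1 :=
    (hasDerivAt_id p.1).prodMk (hasDerivAt_const p.1 p.2)
  exact (HasFDerivAt.comp_hasDerivAt p.1 (f := fun s : ℝ => (s, p.2)) hf.hasFDerivAt h).deriv

theorem pdt_eq {E : Type*} [NormedAddCommGroup E] [NormedSpace ℝ E]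
    {f : ℝ × ℝ → E} {p : ℝ × ℝ} (hf : DifferentiableAt ℝ f p) :
    pdt f p = fderiv ℝ f p (0, 1) := by
  have h : HasDerivAt (fun t : ℝ => (p.1, t)) ((0 : ℝ), (1 : ℝ)) p.2 :=
    (hasDerivAt_const p.2 p.1).prodMk (hasDerivAt_id p.2)
  exact (HasFDerivAt.comp_hasDerivAt p.2 (f := fun t : ℝ => (p.1, t)) hf.hasFDerivAt h).deriv

theorem cd_fderiv_apply {E : Type*} [NormedAddCommGroup E] [NormedSpace ℝ E]
    {f : ℝ × ℝ → E} (hf : ContDiff ℝ (⊤ : ℕ∞) f) (v : ℝ × ℝ) :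
    Differentiable ℝ (fun p => fderiv ℝ f p v) := by
  have h : ContDiff ℝ 1 (fderiv ℝ f) := hf.fderiv_right (by rw [one_add_one_eq_two]; exact two_le_infty)
  exact (h.clm_apply contDiff_const).differentiable (by norm_num)

theorem cd_diff {E : Type*} [NormedAddCommGroup E] [NormedSpace ℝ E]
    {f : ℝ × ℝ → E} (hf : ContDiff ℝ (⊤ : ℕ∞) f) : Differentiable ℝ f :=
  hf.differentiable (by simp)

theorem diff_pds {E : Type*} [NormedAddCommGroup E] [NormedSpace ℝ E]
    {f : ℝ × ℝ → E} (hf : ContDiff ℝ (⊤ : ℕ∞) f) : Differentiable ℝ (pds f) := by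
  have : pds f = fun p => fderiv ℝ f p (1, 0) := funext fun p => pds_eq (cd_diff hf p)
  rw [this]; exact cd_fderiv_apply hf _

theorem pd_comm {E : Type*} [NormedAddCommGroup E] [NormedSpace ℝ E]
    {f : ℝ × ℝ → E} (hf : ContDiff ℝ (⊤ : ℕ∞) f) (p : ℝ × ℝ) :
    pdt (pds f) p = pds (pdt f) p := by
  have h1 : pds f = fun p => fderiv ℝ f p (1, 0) := funext fun p => pds_eq (cd_diff hf p)
  have h2 : pdt f = fun p => fderiv ℝ f p (0, 1) := funext fun p => pdt_eq (cd_diff hf p)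
  rw [h1, h2, pdt_eq (cd_fderiv_apply hf _ p), pds_eq (cd_fderiv_apply hf _ p)]
  have h : ContDiff ℝ 1 (fderiv ℝ f) := hf.fderiv_right (by rw [one_add_one_eq_two]; exact two_le_infty)
  have hd : DifferentiableAt ℝ (fderiv ℝ f) p := h.differentiable (by norm_num) p
  have hs : IsSymmSndFDerivAt ℝ f p :=
    hf.contDiffAt.isSymmSndFDerivAt (by simpa using two_le_infty)
  rw [fderiv_clm_apply hd (differentiableAt_const _), fderiv_clm_apply hd (differentiableAt_const _)]
  simpa using hs.eq (0, 1) (1, 0)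

theorem pds_comb {k l : ℝ × ℝ → ℝ} {X Y : ℝ × ℝ → V3} (hk : Differentiable ℝ k)
    (hl : Differentiable ℝ l) (hX : Differentiable ℝ X) (hY : Differentiable ℝ Y) (p : ℝ × ℝ) :
    pds (fun p => k p • X p + l p • Y p) p =
      (k p • pds X p + pds k p • X p) + (l p • pds Y p + pds l p • Y p) := by
  rw [pds_eq (by fun_prop), pds_eq (hk p), pds_eq (hl p), pds_eq (hX p), pds_eq (hY p),
    fderiv_fun_add (by fun_prop) (by fun_prop), fderiv_fun_smul (hk p) (hX p),
    fderiv_fun_smul (hl p) (hY p)]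
  simp

theorem pdt_comb {k l : ℝ × ℝ → ℝ} {X Y : ℝ × ℝ → V3} (hk : Differentiable ℝ k)
    (hl : Differentiable ℝ l) (hX : Differentiable ℝ X) (hY : Differentiable ℝ Y) (p : ℝ × ℝ) :
    pdt (fun p => k p • X p + l p • Y p) p =
      (k p • pdt X p + pdt k p • X p) + (l p • pdt Y p + pdt l p • Y p) := by
  rw [pdt_eq (by fun_prop), pdt_eq (hk p), pdt_eq (hl p), pdt_eq (hX p), pdt_eq (hY p),
    fderiv_fun_add (by fun_prop) (by fun_prop), fderiv_fun_smul (hk p) (hX p),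
    fderiv_fun_smul (hl p) (hY p)]
  simp

/-- For a parallel frame `(T,E₁,E₂)` of signature `(+,−,+)` with
the stated `s`- and `t`-evolution equations (with `u = ½(k₁² − k₂²)`), the principal
curvatures evolve by `(k₁)_t = (k₂)ₛₛ − ½(k₁² − k₂²)k₂` and
`(k₂)_t = (k₁)ₛₛ − ½(k₁² − k₂²)k₁`. -/
theorem statement13 (T E₁ E₂ : ℝ × ℝ → V3) (k₁ k₂ : ℝ × ℝ → ℝ)
    (hT : ContDiff ℝ (⊤ : ℕ∞) T) (hE₁ : ContDiff ℝ (⊤ : ℕ∞) E₁) (hE₂ : ContDiff ℝ (⊤ : ℕ∞) E₂)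
    (hk₁ : ContDiff ℝ (⊤ : ℕ∞) k₁) (hk₂ : ContDiff ℝ (⊤ : ℕ∞) k₂)
    (hTT : ∀ p, lor (T p) (T p) = 1)
    (hE₁E₁ : ∀ p, lor (E₁ p) (E₁ p) = -1)
    (hE₂E₂ : ∀ p, lor (E₂ p) (E₂ p) = 1)
    (hTE₁ : ∀ p, lor (T p) (E₁ p) = 0)
    (hTE₂ : ∀ p, lor (T p) (E₂ p) = 0)
    (hE₁E₂ : ∀ p, lor (E₁ p) (E₂ p) = 0)
    (hTs : ∀ p, pds T p = k₁ p • E₁ p + k₂ p • E₂ p)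
    (hE₁s : ∀ p, pds E₁ p = k₁ p • T p)
    (hE₂s : ∀ p, pds E₂ p = -(k₂ p) • T p)
    (hTt : ∀ p, pdt T p = (pds k₂ p) • E₁ p + (pds k₁ p) • E₂ p)
    (hE₁t : ∀ p, pdt E₁ p = (pds k₂ p) • T p + ((k₁ p ^ 2 - k₂ p ^ 2) / 2) • E₂ p)
    (hE₂t : ∀ p, pdt E₂ p = -(pds k₁ p) • T p + ((k₁ p ^ 2 - k₂ p ^ 2) / 2) • E₁ p) :
    (∀ p, pdt k₁ p = pds (pds k₂) p - (k₁ p ^ 2 - k₂ p ^ 2) / 2 * k₂ p) ∧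
    (∀ p, pdt k₂ p = pds (pds k₁) p - (k₁ p ^ 2 - k₂ p ^ 2) / 2 * k₁ p) := by
  have key : ∀ p, (pdt k₁ p - (pds (pds k₂) p - (k₁ p ^ 2 - k₂ p ^ 2) / 2 * k₂ p)) • E₁ p +
      (pdt k₂ p - (pds (pds k₁) p - (k₁ p ^ 2 - k₂ p ^ 2) / 2 * k₁ p)) • E₂ p = 0 := by
    intro p
    have h := pd_comm hT p
    rw [show pds T = _ from funext hTs, show pdt T = _ from funext hTt,
      pdt_comb (cd_diff hk₁) (cd_diff hk₂) (cd_diff hE₁) (cd_diff hE₂),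
      pds_comb (diff_pds hk₂) (diff_pds hk₁) (cd_diff hE₁) (cd_diff hE₂),
      hE₁s, hE₂s, hE₁t, hE₂t] at h
    ext i
    have hi := congrFun h i
    simp only [Pi.add_apply, Pi.smul_apply, smul_eq_mul, Pi.zero_apply] at hi ⊢
    linear_combination hi
  have lin : ∀ (a b : ℝ) (p : ℝ × ℝ), a • E₁ p + b • E₂ p = 0 → a = 0 ∧ b = 0 := by
    intro a b p h
    have h0 := congrFun h 0
    have h1 := congrFun h 1
    have h2 := congrFun h 2
    have g1 := hE₁E₁ p
    have g2 := hE₂E₂ p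
    have g3 := hE₁E₂ p
    simp only [Pi.add_apply, Pi.smul_apply, smul_eq_mul, Pi.zero_apply] at h0 h1 h2
    unfold lor at g1 g2 g3
    constructor
    · linear_combination (E₁ p 0) * h0 - (E₁ p 1) * h1 - (E₁ p 2) * h2 + a * g1 + b * g3
    · linear_combination -(E₂ p 0) * h0 + (E₂ p 1) * h1 + (E₂ p 2) * h2 - a * g3 - b * g2
  exact ⟨fun p => sub_eq_zero.mp (lin _ _ p (key p)).1,
    fun p => sub_eq_zero.mp (lin _ _ p (key p)).2⟩
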